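/- (Linear-independence argument at a root of unity, core of the proof of Theorem 4.6) Let k be a field containing a primitive l-th root of unity ε with l ≥ 1 odd. Let n ≥ 1 and fix c ∈ ℕⁿ. Suppose f : ℕⁿ → k has finite support and satisfies, for every μ ∈ ℕⁿ, Σ_{λ ∈ ℕⁿ} f(λ) · ε^{−λ·(μ+c)} · [μ+c ∣ λ]_ε = 0 in k (the sum is finite since f has finite support; here λ·(μ+c) = Σ_i λ_i(μ_i+c_i) ∈ ℕ, and ε^{−m} means (ε^{−1})^m). Then f(λ) = 0 for all λ ∈ ℕⁿ. -/

import Mathlib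

open Finset

noncomputable section

/-- The field `ℚ(v)` of rational functions over `ℚ`. -/
abbrev K : Type := RatFunc ℚ

/-- The indeterminate `v`. -/
def v : K := RatFunc.X

/-- `[i] = (v^i - v^{-i})/(v - v^{-1})`. -/
def qint (i : ℤ) : K := (v ^ i - v ^ (-i)) / (v - v⁻¹)

/-- `[t]! = [1][2]⋯[t]`. -/
def qfact (t : ℕ) : K := ∏ s ∈ Finset.range t, qint (s + 1)

/-- The Gaussian binomial coefficient `[N ∣ t] = ([N][N-1]⋯[N-t+1])/[t]!`. -/
def qbinom (N : ℤ) (t : ℕ) : K := (∏ s ∈ Finset.range t, qint (N - s)) / qfact t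

/-- The q-trinomial coefficient `[a+b+c ; a, b, c] = [a+b+c]!/([a]![b]![c]!)`. -/
def qtri (a b c : ℕ) : K := qfact (a + b + c) / (qfact a * qfact b * qfact c)

/-- The canonical embedding of `ℤ[v, v⁻¹]` into `ℚ(v)`, sending the Laurent
polynomial `∑ a_m T^m` to `∑ a_m v^m`. -/
def laurentToK (p : LaurentPolynomial ℤ) : K := p.coeff.sum fun m a => (a : K) * v ^ m

/-- Evaluation of an integer Laurent polynomial at an element `ε` of a field `k`
(sending `v ↦ ε`). -/
def laurentEval {k : Type*} [Field k] (ε : k) (p : LaurentPolynomial ℤ) : k :=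
  p.coeff.sum fun m a => (a : k) * ε ^ m

theorem laurentEval_eq {k : Type*} [Field k] (ε : kˣ) (p : LaurentPolynomial ℤ) :
    laurentEval (ε : k) p = LaurentPolynomial.eval₂ (Int.castRingHom k) ε p := by
  induction p using LaurentPolynomial.induction_on' with
  | add p q hp hq =>
    rw [map_add, ← hp, ← hq]
    unfold laurentEval
    rw [AddMonoidAlgebra.coeff_add, Finsupp.sum_add_index']
    · intro a; simp
    · intro a b c; push_cast; ring
  | C_mul_T n a =>
    rw [LaurentPolynomial.eval₂_C_mul_T]
    rw [← LaurentPolynomial.single_eq_C_mul_T]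
    unfold laurentEval
    rw [AddMonoidAlgebra.coeff_single, Finsupp.sum_single_index (by simp)]
    simp

theorem v_ne_zero : v ≠ 0 := RatFunc.X_ne_zero

theorem laurentToK_eq (p : LaurentPolynomial ℤ) :
    laurentToK p = LaurentPolynomial.eval₂ (Int.castRingHom K) (Units.mk0 v v_ne_zero) p := by
  rw [← laurentEval_eq]; rfl

theorem laurentToK_inj {p q : LaurentPolynomial ℤ} (h : laurentToK p = laurentToK q) : p = q := by
  rw [← sub_eq_zero]
  rw [laurentToK_eq, laurentToK_eq, ← sub_eq_zero, ← map_sub] at h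
  generalize p - q = r at h
  obtain ⟨n, g, hg⟩ := r.exists_T_pow
  have h1 : LaurentPolynomial.eval₂ (Int.castRingHom K) (Units.mk0 v v_ne_zero)
      (Polynomial.toLaurent g) = 0 := by rw [hg, map_mul, h, zero_mul]
  rw [LaurentPolynomial.eval₂_toLaurent] at h1
  have h2 : Polynomial.eval₂ (Int.castRingHom K) v g =
      algebraMap (Polynomial ℚ) K (g.map (Int.castRingHom ℚ)) := by
    rw [Polynomial.map, Polynomial.hom_eval₂]
    congr 1
    · exact RingHom.ext_int _ _
  have h3 : g = 0 := by
    rw [Units.val_mk0, h2, FaithfulSMul.algebraMap_eq_zero_iff] at h1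
    exact (Polynomial.map_eq_zero_iff (RingHom.injective_int _)).1 h1
  rw [h3, map_zero] at hg
  have : r = r * LaurentPolynomial.T n * LaurentPolynomial.T (-n) := by
    rw [LaurentPolynomial.mul_T_assoc]; simp
  rw [this, ← hg, zero_mul]

theorem v_pow_ne_one (n : ℕ) (hn : n ≠ 0) : v ^ n ≠ 1 := by
  intro h
  have : algebraMap (Polynomial ℚ) K (Polynomial.X ^ n) = algebraMap (Polynomial ℚ) K 1 := by
    simpa [v] using h
  have := RatFunc.algebraMap_injective ℚ this
  have := congrArg Polynomial.natDegree this
  simp at this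
  exact hn this

theorem v_sub_ne : v - v⁻¹ ≠ 0 := by
  intro h
  apply v_pow_ne_one 2 (by norm_num)
  have h0 := v_ne_zero
  field_simp at h
  linear_combination h

theorem qint_ne (t : ℕ) : qint ((t : ℤ) + 1) ≠ 0 := by
  intro h
  unfold qint at h
  rw [div_eq_zero_iff, or_iff_left v_sub_ne, zpow_neg] at h
  have e : v ^ ((t : ℤ) + 1) = v ^ (t + 1) := by exact_mod_cast zpow_natCast v (t + 1)
  rw [e] at h
  apply v_pow_ne_one (2 * (t + 1)) (by omega)
  have h0 := pow_ne_zero (t + 1) v_ne_zero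
  rw [mul_comm, pow_mul]
  generalize v ^ (t + 1) = w at *
  field_simp at h
  linear_combination h

theorem qfact_ne (t : ℕ) : qfact t ≠ 0 := by
  unfold qfact
  exact Finset.prod_ne_zero_iff.2 fun s _ => qint_ne s

theorem qint_split (a b : ℤ) : qint (a + b) = v ^ b * qint a + v ^ (-a) * qint b := by
  unfold qint
  have h0 := v_ne_zero
  rw [neg_add, zpow_add₀ h0, zpow_add₀ h0]
  ring

theorem qbinom_pascal (N : ℤ) (t : ℕ) : qbinom (N + 1) (t + 1) =
    v ^ (N - t) * qbinom N t + v ^ (-((t : ℤ) + 1)) * qbinom N (t + 1) := by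
  unfold qbinom
  rw [Finset.prod_range_succ', Finset.prod_range_succ]
  have hq : qfact (t + 1) = qfact t * qint (t + 1) := by
    unfold qfact; rw [Finset.prod_range_succ]
  rw [hq]
  have e : ∀ s : ℕ, N + 1 - ((s + 1 : ℕ) : ℤ) = N - s := by intro s; push_cast; ring
  simp only [e]
  have e2 : N + 1 - ((0 : ℕ) : ℤ) = ((t : ℤ) + 1) + (N - t) := by push_cast; ring
  rw [e2, qint_split]
  have h1 := qfact_ne t
  have h2 := qint_ne t
  generalize v ^ (N - t) = A
  generalize v ^ (-((t : ℤ) + 1)) = B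
  field_simp

section evalfacts
variable {k : Type*} [Field k] (ε : kˣ) (P : ℤ → ℕ → LaurentPolynomial ℤ)
    (hP : ∀ (N : ℤ) (t : ℕ), laurentToK (P N t) = qbinom N t)

theorem P_zero_right
    (hP : ∀ (N : ℤ) (t : ℕ), laurentToK (P N t) = qbinom N t) (N : ℤ) :
    laurentEval (ε : k) (P N 0) = 1 := by
  have : P N 0 = 1 := by
    apply laurentToK_inj
    rw [hP, laurentToK_eq, map_one]
    simp [qbinom, qfact]
  rw [this, laurentEval_eq, map_one]

theorem P_zero_left
    (hP : ∀ (N : ℤ) (t : ℕ), laurentToK (P N t) = qbinom N t) (t : ℕ) :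
    laurentEval (ε : k) (P 0 (t + 1)) = 0 := by
  have : P 0 (t + 1) = 0 := by
    apply laurentToK_inj
    rw [hP, laurentToK_eq, map_zero]
    unfold qbinom
    rw [Finset.prod_range_succ']
    simp [qint]
  rw [this, laurentEval_eq, map_zero]

theorem P_pascal
    (hP : ∀ (N : ℤ) (t : ℕ), laurentToK (P N t) = qbinom N t) (N : ℤ) (t : ℕ) :
    laurentEval (ε : k) (P (N + 1) (t + 1)) = (ε : k) ^ (N - t) * laurentEval (ε : k) (P N t) +
      (ε : k) ^ (-((t : ℤ) + 1)) * laurentEval (ε : k) (P N (t + 1)) := by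
  have : P (N + 1) (t + 1) = LaurentPolynomial.T (N - t) * P N t +
      LaurentPolynomial.T (-((t : ℤ) + 1)) * P N (t + 1) := by
    apply laurentToK_inj
    rw [hP, laurentToK_eq, map_add, map_mul, map_mul, ← laurentToK_eq (P N t),
      ← laurentToK_eq (P N (t + 1)), hP, hP,
      LaurentPolynomial.eval₂_T, LaurentPolynomial.eval₂_T, qbinom_pascal]
    simp only [Units.val_zpow_eq_zpow_val, Units.val_mk0]
  rw [this]
  simp only [laurentEval_eq, map_add, map_mul, LaurentPolynomial.eval₂_T,
    Units.val_zpow_eq_zpow_val]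
end evalfacts

theorem one_dim {k : Type*} [Field k] (u : k) (hu : u ≠ 0) (h : ℕ → ℕ → k)
    (h0 : ∀ m, h m 0 = 1) (h1 : ∀ t, h 0 (t + 1) = 0)
    (h2 : ∀ m t, h (m + 1) (t + 1) = u ^ (2 * t + 2) * h m (t + 1) + u ^ (2 * t + 1) * h m t)
    (M c : ℕ) : ∀ (a : ℕ → k), (∀ t, M < t → a t = 0) →
    (∀ m, ∑ t ∈ Finset.range (M + 1), a t * h (m + c) t = 0) → ∀ t, a t = 0 := by
  have hlt : ∀ m t, m < t → h m t = 0 := by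
    intro m
    induction m with
    | zero => intro t ht; obtain ⟨s, rfl⟩ := Nat.exists_eq_succ_of_ne_zero ht.ne'; exact h1 s
    | succ m ih =>
      intro t ht
      obtain ⟨s, rfl⟩ := Nat.exists_eq_succ_of_ne_zero (by omega : t ≠ 0)
      rw [Nat.succ_eq_add_one, h2, ih _ (by omega), ih _ (by omega)]; simp
  have hdiag : ∀ m, h m m ≠ 0 := by
    intro m
    induction m with
    | zero => rw [h0]; exact one_ne_zero
    | succ m ih => rw [h2, hlt m (m + 1) (by omega)]; simp [hu, ih]
  induction c with
  | zero =>
    intro a ha hs t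
    induction t using Nat.strong_induction_on with
    | _ t ih =>
      by_cases htM : M < t
      · exact ha t htM
      have := hs t
      rw [Finset.sum_eq_single t] at this
      · exact (mul_eq_zero.1 this).resolve_right (hdiag t)
      · intro s _ hst
        rcases lt_or_gt_of_ne hst with h' | h'
        · rw [ih s h', zero_mul]
        · rw [add_zero, hlt t s h', mul_zero]
      · intro h'; simp at h'; omega
  | succ c ih =>
    intro a ha hs
    have hb := ih (fun t => u ^ (2 * t) * a t + u ^ (2 * t + 1) * a (t + 1)) (by
      intro t ht; rw [ha t ht, ha (t + 1) (by omega)]; simp) (by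
      intro m
      rw [← hs m]
      rw [Finset.sum_range_succ' (fun t => a t * h (m + (c + 1)) t)]
      simp only [← add_assoc, h2, h0]
      simp only [add_mul]
      rw [Finset.sum_add_distrib, Finset.sum_range_succ',
        Finset.sum_range_succ (fun t => u ^ (2 * t + 1) * a (t + 1) * h (m + c) t),
        ha (M + 1) (by omega), h0]
      simp only [mul_add, Finset.sum_add_distrib]
      have e1 : ∀ t, u ^ (2 * (t + 1)) * a (t + 1) * h (m + c) (t + 1) =
        a (t + 1) * (u ^ (2 * t + 2) * h (m + c) (t + 1)) := by intro t; ring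
      have e2 : ∀ t, u ^ (2 * t + 1) * a (t + 1) * h (m + c) t =
        a (t + 1) * (u ^ (2 * t + 1) * h (m + c) t) := by intro t; ring
      simp only [mul_add, mul_one] at e1 ⊢
      simp only [e1, e2]
      ring)
    have key : ∀ d t, M < t + d → a t = 0 := by
      intro d
      induction d with
      | zero => intro t ht; exact ha t ht
      | succ d ihd =>
        intro t ht
        have := hb t
        rw [ihd (t + 1) (by omega), mul_zero, add_zero] at this
        exact (mul_eq_zero.1 this).resolve_left (pow_ne_zero _ hu)
    intro t
    exact key (M + 1) t (by omega)

theorem prod_indep {k : Type*} [Field k] (N : ℕ) (n : ℕ) :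
    ∀ (g : Fin n → Fin N → ℕ → k)
    (_ : ∀ i, ∀ a : Fin N → k, (∀ m, ∑ t, a t * g i t m = 0) → ∀ t, a t = 0)
    (f : (Fin n → Fin N) → k)
    (_ : ∀ μ : Fin n → ℕ, ∑ lam, f lam * ∏ i, g i (lam i) (μ i) = 0), ∀ lam, f lam = 0 := by
  induction n with
  | zero =>
    intro g hg f hf lam
    have := hf (fun _ => 0)
    simp at this
    rw [← this]; congr 1; exact Subsingleton.elim _ _
  | succ n ih =>
    intro g hg f hf lam
    have key : ∀ x : Fin N, ∀ y : Fin n → Fin N, f (Fin.cons x y) = 0 := by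
      intro x
      apply ih (fun i => g i.succ) (fun i => hg i.succ) (fun y => f (Fin.cons x y))
      intro μ
      refine hg 0 (fun x => ∑ y : Fin n → Fin N, f (Fin.cons x y) * ∏ i, g i.succ (y i) (μ i)) ?_ x
      intro m
      rw [← hf (Fin.cons m μ), ← (Fin.consEquiv (fun _ => Fin N)).sum_comp, Fintype.sum_prod_type]
      refine Finset.sum_congr rfl fun x _ => ?_
      rw [Finset.sum_mul]
      refine Finset.sum_congr rfl fun y _ => ?_
      simp only [Fin.consEquiv, Equiv.coe_fn_mk, Fin.prod_univ_succ, Fin.cons_zero, Fin.cons_succ]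
      ring
    rw [← Fin.cons_self_tail lam]
    exact key _ _

/-- The linear-independence argument at a root of unity (core of the proof of
Theorem 4.6).  Here `P N t` is the (unique) integer Laurent polynomial representing
the Gaussian binomial coefficient `[N ∣ t]`, and `[μ+c ∣ λ]_ε` is formalized as
`∏ i, laurentEval ε (P (μ i + c i) (λ i))`. -/
theorem root_of_unity_linear_independence
    {k : Type*} [Field k] (l : ℕ) (hl : 1 ≤ l) (hodd : Odd l)
    (ε : k) (hε : IsPrimitiveRoot ε l)
    (n : ℕ) (hn : 1 ≤ n) (c : Fin n → ℕ)
    (P : ℤ → ℕ → LaurentPolynomial ℤ)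
    (hP : ∀ (N : ℤ) (t : ℕ), laurentToK (P N t) = qbinom N t)
    (f : (Fin n → ℕ) →₀ k)
    (hf : ∀ μ : Fin n → ℕ,
      (f.sum fun lam a =>
        a * ε⁻¹ ^ (∑ i, lam i * (μ i + c i)) *
          ∏ i, laurentEval ε (P ((μ i : ℤ) + (c i : ℤ)) (lam i))) = 0) :
    ∀ lam : Fin n → ℕ, f lam = 0 := by
  have hε0 : ε ≠ 0 := hε.ne_zero (by omega)
  let u : kˣ := Units.mk0 ε hε0
  -- the one-variable functions
  let h : ℕ → ℕ → k := fun m t => ε⁻¹ ^ (t * m) * laurentEval ε (P (m : ℤ) t)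
  have h0 : ∀ m, h m 0 = 1 := by
    intro m
    have := P_zero_right u P hP m
    simp only [u, Units.val_mk0] at this
    simp [h, this]
  have h1 : ∀ t, h 0 (t + 1) = 0 := by
    intro t
    have := P_zero_left u P hP t
    simp only [u, Units.val_mk0] at this
    simp [h, this]
  have h2 : ∀ m t, h (m + 1) (t + 1) =
      ε⁻¹ ^ (2 * t + 2) * h m (t + 1) + ε⁻¹ ^ (2 * t + 1) * h m t := by
    intro m t
    have := P_pascal u P hP m t
    simp only [u, Units.val_mk0] at this
    simp only [h]
    push_cast
    rw [this, mul_add, add_comm]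
    simp only [← mul_assoc]
    simp only [← zpow_natCast, inv_zpow', ← zpow_add₀ hε0]
    congr 3
    · push_cast; ring
    · push_cast; ring
  -- a bound on the support
  obtain ⟨M, hM⟩ : ∃ M : ℕ, ∀ lam ∈ f.support, ∀ i, lam i < M + 1 := by
    refine ⟨f.support.sup fun lam => Finset.univ.sup lam, fun lam hlam i => Nat.lt_succ_of_le ?_⟩
    exact (Finset.le_sup (f := lam) (Finset.mem_univ i)).trans
      (Finset.le_sup (f := fun lam : Fin n → ℕ => Finset.univ.sup lam) hlam)
  let emb : (Fin n → Fin (M + 1)) → (Fin n → ℕ) := fun y i => (y i : ℕ)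
  have hemb : Function.Injective emb := by
    intro x y hxy
    funext i
    exact Fin.ext (congrFun hxy i)
  have main := prod_indep (k := k) (M + 1) n (fun i t m => h (m + c i) t) (by
    intro i a ha t
    have := one_dim ε⁻¹ (inv_ne_zero hε0) h h0 h1 h2 M (c i)
      (fun t => if ht : t < M + 1 then a ⟨t, ht⟩ else 0)
      (by intro t ht; rw [dif_neg (by omega)])
      (by
        intro m
        rw [Finset.sum_range]
        refine Eq.trans (Finset.sum_congr rfl fun t _ => ?_) (ha m)
        rw [dif_pos t.2]) t
    rwa [dif_pos t.2] at this) (fun y => f (emb y)) (by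
    intro μ
    rw [← hf μ, Finsupp.sum_of_support_subset f
      (s := Finset.univ.image emb) _ _ (by simp)]
    · rw [Finset.sum_image hemb.injOn]
      refine Finset.sum_congr rfl fun y _ => ?_
      rw [mul_assoc, ← Finset.prod_pow_eq_pow_sum, ← Finset.prod_mul_distrib]
      simp [h, emb]
    · intro lam hlam
      rw [Finset.mem_image]
      exact ⟨fun i => ⟨lam i, hM lam hlam i⟩, Finset.mem_univ _, rfl⟩)
  intro lam
  by_contra hne
  have hmem := Finsupp.mem_support_iff.2 hne
  exact hne (main fun i => ⟨lam i, hM lam hmem i⟩)
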